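/- The abelianization of Thompson's group F is free abelian of rank 2: Abelianization F is isomorphic to ℤ × ℤ. -/

import Mathlib

/-- The defining relations of Thompson's group `F`:
`xᵢ⁻¹ xₙ xᵢ xₙ₊₁⁻¹` for all natural numbers `i < n`. -/
def thompsonRels : Set (FreeGroup ℕ) :=
  {r | ∃ i n : ℕ, i < n ∧
    r = (FreeGroup.of i)⁻¹ * FreeGroup.of n * FreeGroup.of i * (FreeGroup.of (n + 1))⁻¹}

/-- Thompson's group `F`. -/
abbrev ThompsonF : Type := PresentedGroup thompsonRels

/-- The image of the `n`-th generator in Thompson's group `F`. -/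
def x (n : ℕ) : ThompsonF := PresentedGroup.of n

/-!
`F` is generated by `x₀` and `x₁`, since `xₙ₊₁ = x₀⁻¹ xₙ x₀` for `n ≥ 1`. In a commutative group the
defining relations only say that `x₁, x₂, …` have the same image, so a homomorphism from `F` to
such a group is a free choice of the images of `x₀` and `x₁`. This is the universal property of
`ℤ × ℤ` as the free abelian group on two generators.
-/

namespace ThompsonF

theorem conj_x {i n : ℕ} (h : i < n) : (x i)⁻¹ * x n * x i = x (n + 1) :=
  mul_inv_eq_one.mp (PresentedGroup.one_of_mem (rels := thompsonRels) ⟨i, n, h, rfl⟩)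

theorem closure_x_zero_x_one : Subgroup.closure {x 0, x 1} = ⊤ := by
  have x_zero_mem : x 0 ∈ Subgroup.closure {x 0, x 1} := Subgroup.subset_closure (by simp)
  have x_succ_mem (n : ℕ) : x (n + 1) ∈ Subgroup.closure {x 0, x 1} := by
    induction n with
    | zero => exact Subgroup.subset_closure (by simp)
    | succ n ih =>
      rw [← conj_x n.succ_pos]
      exact mul_mem (mul_mem (inv_mem x_zero_mem) ih) x_zero_mem
  rw [eq_top_iff, ← PresentedGroup.closure_range_of thompsonRels, Subgroup.closure_le]
  rintro _ ⟨_ | n, rfl⟩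
  exacts [x_zero_mem, x_succ_mem n]

theorem hom_ext {M : Type*} [Monoid M] {f g : ThompsonF →* M}
    (h₀ : f (x 0) = g (x 0)) (h₁ : f (x 1) = g (x 1)) : f = g :=
  MonoidHom.eq_of_eqOn_dense closure_x_zero_x_one (by simp [Set.EqOn, h₀, h₁])

section CommGroup

variable {A : Type*} [CommGroup A]

theorem lift_eq_one_of_mem_thompsonRels {f : ℕ → A} (hf : ∀ n, 0 < n → f (n + 1) = f n)
    {r : FreeGroup ℕ} (hr : r ∈ thompsonRels) : FreeGroup.lift f r = 1 := by
  obtain ⟨i, n, hin, rfl⟩ := hr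
  simp only [map_mul, map_inv, FreeGroup.lift_apply_of, hf n (Nat.zero_lt_of_lt hin),
    mul_assoc, mul_left_comm (f n), inv_mul_cancel_left, mul_inv_cancel]

/-- The homomorphism from `F` to a commutative group sending `x₀` to `a` and every later generator
to `b`. -/
def liftComm (a b : A) : ThompsonF →* A :=
  PresentedGroup.toGroup (f := fun n ↦ if n = 0 then a else b) fun _ ↦
    lift_eq_one_of_mem_thompsonRels fun n hn ↦ by simp [hn.ne']

theorem liftComm_x_zero (a b : A) : liftComm a b (x 0) = a :=
  PresentedGroup.toGroup.of _

theorem liftComm_x_one (a b : A) : liftComm a b (x 1) = b :=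
  PresentedGroup.toGroup.of _

end CommGroup

/-- The isomorphism from the abelianization of `F` to `ℤ × ℤ`, written multiplicatively, under which
the classes of `x₀` and `x₁` form the standard basis. -/
def abelianizationEquiv :
    Abelianization ThompsonF ≃* Multiplicative ℤ × Multiplicative ℤ :=
  MonoidHom.toMulEquiv
    (Abelianization.lift (liftComm (.ofAdd 1, 1) (1, .ofAdd 1)))
    ((zpowersHom _ (.of (x 0))).coprod (zpowersHom _ (.of (x 1))))
    (Abelianization.hom_ext _ _ (hom_ext
      (by simp [liftComm_x_zero])
      (by simp [liftComm_x_one])))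
    (by ext <;> simp [liftComm_x_zero, liftComm_x_one])

end ThompsonF

/-- The abelianization of Thompson's group `F` is free abelian of rank 2, i.e. isomorphic
to `ℤ × ℤ`. -/
theorem thompsonF_abelianization :
    Nonempty (Abelianization ThompsonF ≃* Multiplicative (ℤ × ℤ)) :=
  ⟨ThompsonF.abelianizationEquiv.trans (MulEquiv.prodMultiplicative ℤ ℤ).symm⟩
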